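/- C₂ < 1.0650; that is, there exists g ∈ A₂, not identically zero, with g(0) > 0 and ρ₂(g)/g(0) < 1.0650. -/

import Mathlib

open MeasureTheory Filter
open scoped Classical

noncomputable section

/-- The Fourier transform `ĝ(α) = ∫ g(x) e^{-2πiαx} dx` of a real-valued function. -/
def fourierT (g : ℝ → ℝ) (α : ℝ) : ℂ :=
  ∫ x : ℝ, (g x : ℂ) * Complex.exp (-(2 * Real.pi * α * x : ℝ) * Complex.I)

/-- The class `A₂` of continuous, even, non-negative functions `g ∈ L¹(ℝ)`
with `ĝ(α) ≤ 0` for `|α| ≥ 2`. -/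
def memA2 (g : ℝ → ℝ) : Prop :=
  Continuous g ∧ (∀ x, g (-x) = g x) ∧ (∀ x, 0 ≤ g x) ∧ MeasureTheory.Integrable g ∧
    ∀ α : ℝ, 2 ≤ |α| → (fourierT g α).re ≤ 0

/-- The functional `ρ₂(g) = ĝ(0) + ∫_{-1}^{1} ĝ(α)|α| dα + ∫_{1≤|α|≤2} ĝ(α) dα`. -/
def rho2 (g : ℝ → ℝ) : ℝ :=
  (fourierT g 0).re + (∫ α in (-1 : ℝ)..1, (fourierT g α).re * |α|) +
    ∫ α in {α : ℝ | 1 ≤ |α| ∧ |α| ≤ 2}, (fourierT g α).re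

/-- The constant `C₂ = inf ρ₂(g)/g(0)` over nonzero `g ∈ A₂` with `g(0) > 0`. -/
def C2 : ℝ :=
  sInf {c : ℝ | ∃ g : ℝ → ℝ, memA2 g ∧ g ≠ 0 ∧ 0 < g 0 ∧ c = rho2 g / g 0}

/-!
A function `g` is nonnegative and has a piecewise polynomial Fourier transform as soon as `ĝ` is a
cubic spline whose B-spline coefficients are the autocorrelation of a finite sequence `a`: then
`g x = |∑ aⱼ exp(2πijx)|² sinc(πx)⁴`, up to dilation. The value `ρ₂(g)` is linear in these
coefficients, and the condition `ĝ ≤ 0` on `|α| ≥ 2` follows from finitely many linear inequalities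
between them, so a good integer sequence `a` proves the bound by integer arithmetic.

That the infimum defining `C₂` is over a set bounded below is the inequality `ρ₂ ≥ 0` on `A₂`: since
`∫ (1 - |α|) ĝ(α) dα ≤ ĝ(0)` over `|α| ≤ 1`, we have `ρ₂(g) ≥ ∫ ĝ` over `|α| ≤ 2`. The latter is
nonnegative because the Gaussian means of `ĝ` are, as `g ≥ 0`, and discarding `|α| > 2`, where
`ĝ ≤ 0`, only increases them.
-/

section

open Set Complex
open scoped Topology FourierTransform RealInnerProductSpace

section GaussMeans

variable {V : Type*} [NormedAddCommGroup V] [InnerProductSpace ℝ V] [MeasurableSpace V]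
  [BorelSpace V] [FiniteDimensional ℝ V]

theorem integrable_cexp_neg_mul_norm_sq {b : ℝ} (hb : 0 < b) :
    Integrable fun w : V ↦ cexp (-b * ‖w‖ ^ 2) := by
  simpa using GaussianFourier.integrable_cexp_neg_mul_sq_norm_add (V := V) (b := b) (by simpa) 0 0

theorem continuous_fourier_of_integrable {f : V → ℂ} (hf : Integrable f) : Continuous (𝓕 f) :=
  VectorFourier.fourierIntegral_continuous Real.continuous_fourierChar continuous_inner hf

theorem norm_fourier_le_integral_norm (f : V → ℂ) (w : V) : ‖𝓕 f w‖ ≤ ∫ v, ‖f v‖ :=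
  VectorFourier.norm_fourierIntegral_le_integral_norm _ _ _ f w

theorem integrable_gaussian_mul_fourier {f : V → ℂ} (hf : Integrable f) {b : ℝ} (hb : 0 < b) :
    Integrable fun w : V ↦ cexp (-b * ‖w‖ ^ 2) * 𝓕 f w :=
  (integrable_cexp_neg_mul_norm_sq hb).mul_bdd
    (continuous_fourier_of_integrable hf).aestronglyMeasurable
    (.of_forall (norm_fourier_le_integral_norm f))

theorem fourier_gaussian_eq_ofReal {b : ℝ} (hb : 0 < b) (v : V) :
    𝓕 (fun w : V ↦ cexp (-b * ‖w‖ ^ 2)) v =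
      (((Real.pi / b) ^ (Module.finrank ℝ V / 2 : ℝ) *
        Real.exp (-Real.pi ^ 2 * ‖v‖ ^ 2 / b) : ℝ) : ℂ) := by
  rw [fourier_gaussian_innerProductSpace (by simpa)]
  push_cast [Complex.ofReal_cpow (show 0 ≤ Real.pi / b by positivity)]
  rfl

theorem integral_gaussian_mul_re_fourier_nonneg {g : V → ℝ} (hg : Integrable g)
    (hg0 : ∀ v, 0 ≤ g v) {b : ℝ} (hb : 0 < b) :
    0 ≤ ∫ w, (cexp (-b * ‖w‖ ^ 2) * 𝓕 (fun v ↦ (g v : ℂ)) w).re := by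
  have hre := integral_re (integrable_gaussian_mul_fourier hg.ofReal hb)
  have hflip : ∫ w, cexp (-b * ‖w‖ ^ 2) * 𝓕 (fun v ↦ (g v : ℂ)) w =
      ∫ v, 𝓕 (fun w : V ↦ cexp (-b * ‖w‖ ^ 2)) v * g v := by
    simpa using! (VectorFourier.integral_fourierIntegral_smul_eq_flip (L := innerₗ V)
      Real.continuous_fourierChar continuous_inner
      (integrable_cexp_neg_mul_norm_sq hb) hg.ofReal).symm
  refine le_of_le_of_eq ?_ hre.symm
  simp_rw [RCLike.ofReal_eq_complex_ofReal, hflip, fourier_gaussian_eq_ofReal hb, ← ofReal_mul]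
  rw [integral_complex_ofReal]
  exact integral_nonneg fun v ↦ mul_nonneg (by positivity) (hg0 v)

theorem setIntegral_re_fourier_nonneg {g : V → ℝ} (hg : Integrable g) (hg0 : ∀ v, 0 ≤ g v)
    {S : Set V} (hS : MeasurableSet S) (hSg : IntegrableOn (𝓕 fun v ↦ (g v : ℂ)) S)
    (hneg : ∀ w ∉ S, (𝓕 (fun v ↦ (g v : ℂ)) w).re ≤ 0) :
    0 ≤ ∫ w in S, (𝓕 (fun v ↦ (g v : ℂ)) w).re := by
  set F : V → ℂ := 𝓕 fun v ↦ (g v : ℂ)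
  have hgauss (c : ℝ) (w : V) : cexp (-c⁻¹ * ‖w‖ ^ 2) = (Real.exp (-c⁻¹ * ‖w‖ ^ 2) : ℝ) := by
    push_cast; rfl
  have hlim : Tendsto (fun c : ℝ ↦ (∫ w, cexp (-c⁻¹ * ‖w‖ ^ 2) • S.indicator F w).re) atTop
      (𝓝 (∫ w in S, (F w).re)) := by
    have hre : ∫ w in S, (F w).re = (∫ w in S, F w).re := integral_re hSg
    rw [hre, ← integral_indicator hS]
    exact (continuous_re.tendsto _).comp
      (Real.tendsto_integral_cexp_sq_smul ((integrable_indicator_iff hS).2 hSg))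
  refine ge_of_tendsto hlim ?_
  filter_upwards [Ioi_mem_atTop 0] with c (hc : 0 < c)
  have hint : Integrable fun w ↦ cexp (-c⁻¹ * ‖w‖ ^ 2) * F w := by
    simpa using integrable_gaussian_mul_fourier hg.ofReal (inv_pos.2 hc)
  have hint' : Integrable fun w ↦ cexp (-c⁻¹ * ‖w‖ ^ 2) * S.indicator F w :=
    (hint.indicator hS).congr (.of_forall fun w ↦ indicator_mul_right S _ F)
  calc
    0 ≤ ∫ w, (cexp (-c⁻¹ * ‖w‖ ^ 2) * F w).re := by
      simpa using integral_gaussian_mul_re_fourier_nonneg hg hg0 (inv_pos.2 hc)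
    _ ≤ ∫ w, (cexp (-c⁻¹ * ‖w‖ ^ 2) * S.indicator F w).re := by
      refine integral_mono hint.re hint'.re fun w ↦ ?_
      by_cases hw : w ∈ S
      · simp [hw]
      · rw [indicator_of_notMem hw, mul_zero, zero_re, hgauss, re_ofReal_mul]
        exact mul_nonpos_of_nonneg_of_nonpos (Real.exp_pos _).le (hneg w hw)
    _ = (∫ w, cexp (-c⁻¹ * ‖w‖ ^ 2) • S.indicator F w).re := integral_re hint'

end GaussMeans

section Functional

theorem fourierT_eq_fourier (g : ℝ → ℝ) : fourierT g = 𝓕 fun x ↦ (g x : ℂ) := by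
  ext α
  rw [Real.fourier_real_eq_integral_exp_smul, fourierT]
  refine integral_congr_ae (.of_forall fun x ↦ ?_)
  simp only [smul_eq_mul, mul_comm (g x : ℂ)]
  congr 3
  push_cast
  ring

theorem continuous_fourierT {g : ℝ → ℝ} (hg : Integrable g) : Continuous (fourierT g) :=
  fourierT_eq_fourier g ▸ continuous_fourier_of_integrable hg.ofReal

theorem re_fourierT_neg (g : ℝ → ℝ) (α : ℝ) : (fourierT g (-α)).re = (fourierT g α).re := by
  have hconj : fourierT g (-α) = (starRingEnd ℂ) (fourierT g α) := by
    rw [fourierT, fourierT, ← integral_conj]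
    refine integral_congr_ae (.of_forall fun x ↦ ?_)
    simp [← Complex.exp_conj, map_ofNat]
  rw [hconj, conj_re]

theorem re_fourierT_abs (g : ℝ → ℝ) (α : ℝ) : (fourierT g |α|).re = (fourierT g α).re := by
  rcases abs_choice α with h | h <;> simp only [h, re_fourierT_neg]

theorem re_fourierT_le {g : ℝ → ℝ} (hg0 : ∀ x, 0 ≤ g x) (α : ℝ) :
    (fourierT g α).re ≤ (fourierT g 0).re := by
  have hzero : fourierT g 0 = ((∫ x, g x : ℝ) : ℂ) := by simp [fourierT, integral_complex_ofReal]
  calc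
    (fourierT g α).re ≤ ‖fourierT g α‖ := re_le_norm _
    _ ≤ ∫ x, ‖(g x : ℂ)‖ := fourierT_eq_fourier g ▸ norm_fourier_le_integral_norm _ α
    _ = (fourierT g 0).re := by simp [hzero, abs_of_nonneg (hg0 _)]

theorem setIntegral_comp_abs (f : ℝ → ℝ) {a b : ℝ} (ha : 0 ≤ a) (hab : a ≤ b) :
    ∫ x in {x : ℝ | a ≤ |x| ∧ |x| ≤ b}, f |x| = 2 * ∫ x in a..b, f x := by
  have hmeas : MeasurableSet {x : ℝ | a ≤ |x| ∧ |x| ≤ b} :=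
    (continuous_abs.measurable measurableSet_Icc : MeasurableSet (abs ⁻¹' Icc a b))
  calc
    _ = ∫ x, (Icc a b).indicator f |x| := (integral_indicator hmeas).symm
    _ = 2 * ∫ x in Ici 0 ∩ Icc a b, f x := by
      rw [integral_comp_abs, ← integral_Ici_eq_integral_Ioi,
        setIntegral_indicator measurableSet_Icc]
    _ = 2 * ∫ x in a..b, f x := by
      rw [inter_eq_right.2 (Icc_subset_Ici_self.trans (Ici_subset_Ici.2 ha)),
        intervalIntegral.integral_of_le hab, integral_Icc_eq_integral_Ioc]

theorem rho2_eq (g : ℝ → ℝ) :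
    rho2 g = (fourierT g 0).re + 2 * (∫ α in (0 : ℝ)..1, (fourierT g α).re * α) +
      2 * ∫ α in (1 : ℝ)..2, (fourierT g α).re := by
  have hball : Icc (-1 : ℝ) 1 = {x | 0 ≤ |x| ∧ |x| ≤ 1} := by ext x; simp [abs_le]
  rw [rho2, intervalIntegral.integral_of_le (by norm_num), ← integral_Icc_eq_integral_Ioc, hball,
    ← setIntegral_comp_abs _ le_rfl zero_le_one, ← setIntegral_comp_abs _ zero_le_one one_le_two]
  simp only [re_fourierT_abs]

theorem integral_re_fourierT_nonneg {g : ℝ → ℝ} (hg : memA2 g) :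
    0 ≤ ∫ α in (0 : ℝ)..2, (fourierT g α).re := by
  obtain ⟨-, -, hg0, hint, hneg⟩ := hg
  have hball : Icc (-2 : ℝ) 2 = {x | 0 ≤ |x| ∧ |x| ≤ 2} := by ext x; simp [abs_le]
  have hpos : 0 ≤ ∫ α in Icc (-2 : ℝ) 2, (fourierT g α).re := by
    have hcont := continuous_fourierT hint
    rw [fourierT_eq_fourier] at hcont hneg ⊢
    refine setIntegral_re_fourier_nonneg hint hg0 measurableSet_Icc
      hcont.continuousOn.integrableOn_Icc fun α hα ↦ hneg α ?_
    rw [mem_Icc, ← abs_le] at hα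
    exact (not_le.1 hα).le
  have heven := setIntegral_comp_abs (fun α ↦ (fourierT g α).re) le_rfl zero_le_two
  simp only [re_fourierT_abs, ← hball] at heven
  linarith

theorem integral_mul_one_sub_le {φ : ℝ → ℝ} (hφ : Continuous φ) {M : ℝ} (hM : ∀ x, φ x ≤ M) :
    ∫ x in (0 : ℝ)..1, φ x * (1 - x) ≤ M / 2 := by
  calc
    ∫ x in (0 : ℝ)..1, φ x * (1 - x) ≤ ∫ x in (0 : ℝ)..1, M * (1 - x) :=
      intervalIntegral.integral_mono_on zero_le_one
        (Continuous.intervalIntegrable (by fun_prop) _ _)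
        (Continuous.intervalIntegrable (by fun_prop) _ _)
        fun x hx ↦ mul_le_mul_of_nonneg_right (hM x) (sub_nonneg.2 hx.2)
    _ = M / 2 := by
      rw [intervalIntegral.integral_const_mul, intervalIntegral.integral_sub (by simp) (by simp)]
      norm_num [integral_id]
      ring

theorem rho2_nonneg {g : ℝ → ℝ} (hg : memA2 g) : 0 ≤ rho2 g := by
  have hcont : Continuous fun α ↦ (fourierT g α).re :=
    continuous_re.comp (continuous_fourierT hg.2.2.2.1)
  have hsplit : ∫ α in (0 : ℝ)..2, (fourierT g α).re =
      (∫ α in (0 : ℝ)..1, (fourierT g α).re) + ∫ α in (1 : ℝ)..2, (fourierT g α).re :=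
    (intervalIntegral.integral_add_adjacent_intervals (hcont.intervalIntegrable _ _)
      (hcont.intervalIntegrable _ _)).symm
  have htent : ∫ α in (0 : ℝ)..1, (fourierT g α).re * (1 - α) =
      (∫ α in (0 : ℝ)..1, (fourierT g α).re) - ∫ α in (0 : ℝ)..1, (fourierT g α).re * α := by
    simp only [mul_one_sub]
    exact intervalIntegral.integral_sub (hcont.intervalIntegrable _ _)
      (Continuous.intervalIntegrable (by fun_prop) _ _)
  linarith [rho2_eq g, integral_re_fourierT_nonneg hg,
    integral_mul_one_sub_le hcont (re_fourierT_le hg.2.2.1)]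

-- If the set were not bounded below, its `sInf` would be the junk value `0`.
theorem bddBelow_rho2_div :
    BddBelow {c : ℝ | ∃ g : ℝ → ℝ, memA2 g ∧ g ≠ 0 ∧ 0 < g 0 ∧ c = rho2 g / g 0} := by
  refine ⟨0, ?_⟩
  rintro _ ⟨g, hg, -, hg0, rfl⟩
  exact div_nonneg (rho2_nonneg hg) hg0.le

end Functional

section BSpline

open scoped Convolution Nat

/-- The average of `f` over the unit interval centred at the argument. -/
def unitAverage {E : Type*} [NormedAddCommGroup E] [NormedSpace ℝ E] (f : ℝ → E) (x : ℝ) : E :=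
  ∫ y in (x - 1 / 2)..(x + 1 / 2), f y

/-- The centred cardinal B-spline of degree `n`: the convolution of `n + 1` copies of the indicator
function of the unit interval `(-1/2, 1/2]`. -/
def bspline : ℕ → ℝ → ℝ
  | 0 => (Ioc (-(1 / 2)) (1 / 2)).indicator 1
  | n + 1 => unitAverage (bspline n)

theorem integral_bspline_zero_mul (f : ℝ → ℂ) :
    ∫ x, (bspline 0 x : ℂ) * f x = ∫ x in (-(1 / 2) : ℝ)..1 / 2, f x := by
  have hbox (x : ℝ) : (bspline 0 x : ℂ) * f x = (Ioc (-(1 / 2)) (1 / 2)).indicator f x := by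
    by_cases hx : x ∈ Ioc (-(1 / 2) : ℝ) (1 / 2)
    · rw [bspline, indicator_of_mem hx, indicator_of_mem hx, Pi.one_apply, ofReal_one, one_mul]
    · rw [bspline, indicator_of_notMem hx, indicator_of_notMem hx, ofReal_zero, zero_mul]
  simp_rw [hbox]
  rw [integral_indicator measurableSet_Ioc, intervalIntegral.integral_of_le (by norm_num)]

theorem unitAverage_eq_convolution (f : ℝ → ℂ) :
    unitAverage f = (fun x ↦ (bspline 0 x : ℂ)) ⋆[ContinuousLinearMap.mul ℂ ℂ] f := by
  ext x
  simp only [convolution_def, ContinuousLinearMap.mul_apply']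
  rw [integral_bspline_zero_mul fun t ↦ f (x - t), intervalIntegral.integral_comp_sub_left,
    sub_neg_eq_add, unitAverage]

theorem ofReal_bspline_succ (n : ℕ) :
    (fun x ↦ (bspline (n + 1) x : ℂ)) = (fun x ↦ (bspline 0 x : ℂ))
      ⋆[ContinuousLinearMap.mul ℂ ℂ] fun x ↦ (bspline n x : ℂ) := by
  rw [← unitAverage_eq_convolution]
  exact funext fun x ↦ intervalIntegral.integral_ofReal.symm

theorem integrable_ofReal_bspline : ∀ n, Integrable fun x ↦ (bspline n x : ℂ)
  | 0 => by
    have hbox : Integrable (bspline 0) :=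
      (integrable_indicator_iff measurableSet_Ioc).2 (integrableOn_const measure_Ioc_lt_top.ne)
    exact hbox.ofReal
  | n + 1 => ofReal_bspline_succ n ▸
    (integrable_ofReal_bspline 0).integrable_convolution _ (integrable_ofReal_bspline n)

theorem integrable_bspline (n : ℕ) : Integrable (bspline n) :=
  (integrable_ofReal_bspline n).re

theorem continuous_bspline_succ (n : ℕ) : Continuous (bspline (n + 1)) := by
  have hint (a b : ℝ) : IntervalIntegrable (bspline n) volume a b :=
    (integrable_bspline n).intervalIntegrable
  have hprim := intervalIntegral.continuous_primitive hint 0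
  have hsub (x : ℝ) : bspline (n + 1) x =
      (∫ y in (0 : ℝ)..x + 1 / 2, bspline n y) - ∫ y in (0 : ℝ)..x - 1 / 2, bspline n y :=
    (intervalIntegral.integral_interval_sub_left (hint _ _) (hint _ _)).symm
  rw [funext hsub]
  exact (hprim.comp (continuous_add_const _)).sub (hprim.comp (continuous_id.sub continuous_const))

theorem fourier_bspline_zero (ξ : ℝ) :
    𝓕 (fun x ↦ (bspline 0 x : ℂ)) ξ = (Real.sinc (Real.pi * ξ) : ℂ) := by
  simp_rw [Real.fourier_real_eq_integral_exp_smul, smul_eq_mul, mul_comm (cexp _)]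
  rw [integral_bspline_zero_mul fun x ↦ cexp (↑(-2 * Real.pi * x * ξ) * I)]
  rcases eq_or_ne ξ 0 with rfl | hξ
  · norm_num
  have hscale (x : ℝ) : -2 * Real.pi * x * ξ = 2 * (-(Real.pi * ξ)) * x := by ring
  have hne : 2 * (-(Real.pi * ξ)) ≠ 0 := by simp [hξ, Real.pi_ne_zero]
  simp_rw [hscale]
  rw [intervalIntegral.integral_comp_mul_left (fun t : ℝ ↦ cexp (t * I)) hne,
    show 2 * (-(Real.pi * ξ)) * -(1 / 2) = -(-(Real.pi * ξ)) by ring,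
    show 2 * (-(Real.pi * ξ)) * (1 / 2) = -(Real.pi * ξ) by ring, integral_exp_mul_I_eq_sinc,
    Real.sinc_neg, real_smul]
  push_cast
  have hξ' : (ξ : ℂ) ≠ 0 := ofReal_ne_zero.2 hξ
  field_simp

theorem fourier_bspline (n : ℕ) (ξ : ℝ) :
    𝓕 (fun x ↦ (bspline n x : ℂ)) ξ = (Real.sinc (Real.pi * ξ) : ℂ) ^ (n + 1) := by
  induction n with
  | zero => rw [fourier_bspline_zero, zero_add, pow_one]
  | succ n ih =>
    rw [ofReal_bspline_succ, Real.fourier_mul_convolution_eq (R := ℂ) (integrable_ofReal_bspline 0)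
      (integrable_ofReal_bspline n), fourier_bspline_zero, ih, pow_succ' _ (n + 1)]

/-- The truncated power `x₊ⁿ / n!`, the `(n + 1)`-fold antiderivative of the Dirac mass at `0`. -/
def truncPow (n : ℕ) : ℝ → ℝ :=
  (Ioi 0).indicator fun x ↦ x ^ n / n !

theorem intervalIntegrable_truncPow (n : ℕ) (a b : ℝ) :
    IntervalIntegrable (truncPow n) volume a b := by
  have hpow : IntervalIntegrable (fun x : ℝ ↦ x ^ n / n !) volume a b :=
    Continuous.intervalIntegrable (by fun_prop) a b
  exact ⟨hpow.1.indicator measurableSet_Ioi, hpow.2.indicator measurableSet_Ioi⟩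

theorem integral_zero_truncPow (n : ℕ) (b : ℝ) :
    ∫ x in (0 : ℝ)..b, truncPow n x = truncPow (n + 1) b := by
  rcases le_or_gt b 0 with hb | hb
  · rw [truncPow, truncPow, indicator_of_notMem (notMem_Ioi.2 hb)]
    refine intervalIntegral.integral_zero_ae (.of_forall fun x hx ↦ ?_)
    rw [uIoc_of_ge hb] at hx
    exact indicator_of_notMem (notMem_Ioi.2 hx.2) _
  · have hpow : ∫ x in (0 : ℝ)..b, truncPow n x = ∫ x in (0 : ℝ)..b, x ^ n / n ! := by
      refine intervalIntegral.integral_congr_ae (.of_forall fun x hx ↦ ?_)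
      rw [uIoc_of_le hb.le] at hx
      exact indicator_of_mem (mem_Ioi.2 hx.1) _
    rw [hpow, intervalIntegral.integral_div, integral_pow, truncPow,
      indicator_of_mem (mem_Ioi.2 hb), Nat.factorial_succ]
    push_cast
    rw [zero_pow n.succ_ne_zero, sub_zero, div_div]

theorem integral_truncPow (n : ℕ) (a b : ℝ) :
    ∫ x in a..b, truncPow n x = truncPow (n + 1) b - truncPow (n + 1) a := by
  rw [← integral_zero_truncPow, ← integral_zero_truncPow,
    intervalIntegral.integral_interval_sub_left (intervalIntegrable_truncPow n _ _)
      (intervalIntegrable_truncPow n _ _)]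

theorem integral_fwdDiff_iter {E : Type*} [NormedAddCommGroup E] [NormedSpace ℝ E] {f F : ℝ → E}
    (hf : ∀ a b, IntervalIntegrable f volume a b)
    (hF : ∀ a b, ∫ x in a..b, f x = F b - F a) (h : ℝ) (n : ℕ) (a b : ℝ) :
    ∫ x in a..b, (fwdDiff h)^[n] f x = (fwdDiff h)^[n] F b - (fwdDiff h)^[n] F a := by
  induction n generalizing f F with
  | zero => exact hF a b
  | succ _ ih =>
    have hshift (a b : ℝ) : IntervalIntegrable (fun x ↦ f (x + h)) volume a b := by
      simpa using (hf (a + h) (b + h)).comp_add_right h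
    refine ih (fun a b ↦ (hshift a b).sub (hf a b)) fun a b ↦ ?_
    simp only [fwdDiff]
    rw [intervalIntegral.integral_sub (hshift a b) (hf a b),
      intervalIntegral.integral_comp_add_right, hF, hF, sub_sub_sub_comm]

theorem bspline_eq_fwdDiff_truncPow (n : ℕ) (x : ℝ) :
    bspline n x = (fwdDiff 1)^[n + 1] (truncPow n) (x - (n + 1) / 2) := by
  induction n generalizing x with
  | zero =>
    simp only [bspline, truncPow, fwdDiff, indicator_apply, mem_Ioc, mem_Ioi, Pi.one_apply,
      Function.iterate_succ, Function.iterate_zero, Function.comp_apply, id_eq, pow_zero,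
      Nat.factorial_zero, Nat.cast_one, Nat.cast_zero, div_one, zero_add]
    grind
  | succ n ih =>
    rw [bspline, unitAverage]
    simp_rw [ih]
    rw [intervalIntegral.integral_comp_sub_right, integral_fwdDiff_iter
      (intervalIntegrable_truncPow n) (integral_truncPow n), Function.iterate_succ_apply' _ (n + 1),
      fwdDiff]
    push_cast
    ring_nf

end BSpline

section FourierRules

theorem integrable_ofReal_mul_cexp {g : ℝ → ℝ} (hg : Integrable g) (α : ℝ) :
    Integrable fun x : ℝ ↦ (g x : ℂ) * cexp (-(2 * Real.pi * α * x : ℝ) * I) := by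
  refine hg.ofReal.mul_bdd (c := 1) (Continuous.aestronglyMeasurable (by fun_prop))
    (.of_forall fun x ↦ ?_)
  rw [← ofReal_neg, norm_exp_ofReal_mul_I]

theorem fourierT_sum_mul {ι : Type*} (s : Finset ι) (c : ι → ℝ) {f : ι → ℝ → ℝ}
    (hf : ∀ i ∈ s, Integrable (f i)) (α : ℝ) :
    fourierT (fun x ↦ ∑ i ∈ s, c i * f i x) α = ∑ i ∈ s, c i * fourierT (f i) α := by
  have hterm (x : ℝ) : ((∑ i ∈ s, c i * f i x : ℝ) : ℂ) * cexp (-(2 * Real.pi * α * x : ℝ) * I) =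
      ∑ i ∈ s, c i * (f i x * cexp (-(2 * Real.pi * α * x : ℝ) * I)) := by
    rw [ofReal_sum, Finset.sum_mul]
    exact Finset.sum_congr rfl fun i _ ↦ by rw [ofReal_mul, mul_assoc]
  simp_rw [fourierT, hterm]
  rw [integral_finsetSum _ fun i hi ↦ (integrable_ofReal_mul_cexp (hf i hi) α).const_mul _]
  simp_rw [integral_const_mul]

theorem fourierT_comp_sub (g : ℝ → ℝ) (t α : ℝ) :
    fourierT (fun x ↦ g (x - t)) α = cexp (-(2 * Real.pi * α * t : ℝ) * I) * fourierT g α := by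
  rw [fourierT, fourierT, ← integral_const_mul, ← integral_add_right_eq_self _ t]
  refine integral_congr_ae (.of_forall fun x ↦ ?_)
  simp only [mul_left_comm (cexp _), ← Complex.exp_add, add_sub_cancel_right]
  congr 2
  push_cast
  ring

theorem fourierT_comp_div (g : ℝ → ℝ) {m : ℝ} (hm : 0 < m) (α : ℝ) :
    fourierT (fun x ↦ g (x / m)) α = m * fourierT g (m * α) := by
  have hscale := Measure.integral_comp_div
    (fun x : ℝ ↦ (g x : ℂ) * cexp (-(2 * Real.pi * (m * α) * x : ℝ) * I)) m
  rw [abs_of_pos hm, real_smul] at hscale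
  rw [fourierT, fourierT, ← hscale]
  refine integral_congr_ae (.of_forall fun x ↦ ?_)
  simp only
  congr 4
  field_simp

end FourierRules

section Autocorrelation

variable {n : ℕ}

/-- The autocorrelation `∑ a_j a_k`, over `j - k = l`, of a finite sequence. -/
def autocorr {R : Type*} [CommSemiring R] (a : Fin n → R) (l : ℤ) : R :=
  ∑ p : Fin n × Fin n with (p.1 : ℤ) - p.2 = l, a p.1 * a p.2

theorem map_autocorr {R S : Type*} [CommSemiring R] [CommSemiring S] (φ : R →+* S)
    (a : Fin n → R) (l : ℤ) : φ (autocorr a l) = autocorr (fun j ↦ φ (a j)) l := by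
  simp only [autocorr, map_sum, map_mul]

theorem autocorr_intCast (a : Fin n → ℤ) (l : ℤ) :
    autocorr (fun j ↦ (a j : ℝ)) l = (autocorr a l : ℤ) :=
  (map_autocorr (Int.castRingHom ℝ) a l).symm

theorem autocorr_eq_zero {R : Type*} [CommSemiring R] (a : Fin n → R) {l : ℤ}
    (hl : n ≤ l) : autocorr a l = 0 := by
  refine Finset.sum_eq_zero fun p hp ↦ ?_
  have hlag := (Finset.mem_filter.1 hp).2
  omega

/-- The combination `∑ b_l f(x - l)` of integer translates of `f` whose coefficients `b_l` are the
autocorrelation of `a`. -/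
def autocorrSum (a : Fin n → ℝ) (f : ℝ → ℝ) (x : ℝ) : ℝ :=
  ∑ p : Fin n × Fin n, a p.1 * a p.2 * f (x - (p.1 - p.2 : ℤ))

/-- The trigonometric polynomial `∑ a_j exp(2πijξ)`. -/
def trigPoly (a : Fin n → ℝ) (ξ : ℝ) : ℂ :=
  ∑ j, a j * cexp (2 * Real.pi * ξ * j * I)

theorem normSq_trigPoly (a : Fin n → ℝ) (ξ : ℝ) :
    (normSq (trigPoly a ξ) : ℂ) =
      ∑ p : Fin n × Fin n, a p.1 * a p.2 * cexp (-(2 * Real.pi * ξ * (p.1 - p.2 : ℤ) : ℝ) * I) := by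
  rw [normSq_eq_conj_mul_self, trigPoly, map_sum, Finset.sum_mul_sum, Fintype.sum_prod_type]
  refine Finset.sum_congr rfl fun j _ ↦ Finset.sum_congr rfl fun k _ ↦ ?_
  rw [map_mul, conj_ofReal, ← Complex.exp_conj, mul_mul_mul_comm, ← Complex.exp_add]
  simp only [map_mul, conj_ofReal, conj_I, map_ofNat, map_natCast]
  congr 2
  push_cast
  ring

theorem fourierT_autocorrSum (a : Fin n → ℝ) {f : ℝ → ℝ} (hf : Integrable f) (ξ : ℝ) :
    fourierT (autocorrSum a f) ξ = normSq (trigPoly a ξ) * fourierT f ξ := by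
  have hsum := fourierT_sum_mul Finset.univ (fun p : Fin n × Fin n ↦ a p.1 * a p.2)
    (fun p _ ↦ hf.comp_sub_right ((p.1 - p.2 : ℤ) : ℝ)) ξ
  refine hsum.trans ?_
  rw [normSq_trigPoly, Finset.sum_mul]
  refine Finset.sum_congr rfl fun p _ ↦ ?_
  rw [fourierT_comp_sub, ofReal_mul, ← mul_assoc]

theorem integrable_autocorrSum (a : Fin n → ℝ) {f : ℝ → ℝ} (hf : Integrable f) :
    Integrable (autocorrSum a f) :=
  integrable_finsetSum _ fun _ _ ↦ (hf.comp_sub_right _).const_mul _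

theorem continuous_autocorrSum (a : Fin n → ℝ) {f : ℝ → ℝ} (hf : Continuous f) :
    Continuous (autocorrSum a f) := by
  unfold autocorrSum
  fun_prop

theorem continuous_trigPoly (a : Fin n → ℝ) : Continuous (trigPoly a) := by
  unfold trigPoly
  fun_prop

theorem trigPoly_neg (a : Fin n → ℝ) (ξ : ℝ) :
    trigPoly a (-ξ) = (starRingEnd ℂ) (trigPoly a ξ) := by
  simp [trigPoly, ← Complex.exp_conj, map_ofNat, map_natCast]

theorem norm_trigPoly_le (a : Fin n → ℝ) (ξ : ℝ) : ‖trigPoly a ξ‖ ≤ ∑ j, |a j| := by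
  refine (norm_sum_le _ _).trans_eq (Finset.sum_congr rfl fun j _ ↦ ?_)
  have hphase : (2 * Real.pi * ξ * j * I : ℂ) = (2 * Real.pi * ξ * j : ℝ) * I := by push_cast; rfl
  rw [hphase, norm_mul, norm_exp_ofReal_mul_I, mul_one, norm_real, Real.norm_eq_abs]

end Autocorrelation

section Inversion

theorem fourierT_eq_of_fourierT_eq {f h : ℝ → ℝ} (hf : Continuous f) (hf' : Integrable f)
    (hh : Integrable h) (heven : ∀ x, h (-x) = h x) (hfh : ∀ ξ, fourierT f ξ = h ξ) (x : ℝ) :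
    fourierT h x = f x := by
  have hdual : 𝓕 (fun y ↦ (f y : ℂ)) = fun ξ ↦ (h ξ : ℂ) := by
    rw [← fourierT_eq_fourier]
    exact funext hfh
  have hcont : Continuous fun y ↦ (f y : ℂ) := continuous_ofReal.comp hf
  have hinv := hcont.fourierInv_fourier_eq hf'.ofReal (hdual ▸ hh.ofReal)
  rw [fourierT_eq_fourier]
  calc
    𝓕 (fun ξ ↦ (h ξ : ℂ)) x = 𝓕 (fun ξ ↦ (h (-ξ) : ℂ)) x := by simp_rw [heven]
    _ = 𝓕⁻ (fun ξ ↦ (h ξ : ℂ)) x := by rw [Real.fourierInv_eq_fourier_comp_neg]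
    _ = f x := by rw [← hdual]; exact congrFun hinv x

theorem sinc_sq_mul_one_add_sq_le_two (x : ℝ) : Real.sinc x ^ 2 * (1 + x ^ 2) ≤ 2 := by
  have hsinc : Real.sinc x ^ 2 ≤ 1 := (sq_le_one_iff_abs_le_one _).2 (Real.abs_sinc_le_one x)
  rcases eq_or_ne x 0 with rfl | hx
  · norm_num
  · have hsin : Real.sinc x * x = Real.sin x := by
      rw [Real.sinc_of_ne_zero hx, div_mul_cancel₀ _ hx]
    nlinarith [Real.sin_sq_le_one x, congrArg (· ^ 2) hsin]

theorem integrable_sinc_pow {n : ℕ} (hn : 2 ≤ n) : Integrable fun x ↦ Real.sinc x ^ n := by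
  refine (integrable_inv_one_add_sq.const_mul 2).mono'
    (Real.continuous_sinc.pow n).aestronglyMeasurable (.of_forall fun x ↦ ?_)
  calc
    ‖Real.sinc x ^ n‖ ≤ |Real.sinc x| ^ 2 := by
      rw [norm_pow, Real.norm_eq_abs]
      exact pow_le_pow_of_le_one (abs_nonneg _) (Real.abs_sinc_le_one x) hn
    _ ≤ 2 * (1 + x ^ 2)⁻¹ := by
      rw [sq_abs, ← div_eq_mul_inv, le_div_iff₀ (by positivity)]
      exact sinc_sq_mul_one_add_sq_le_two x

end Inversion

section SplineDual

variable {n : ℕ} (a : Fin n → ℝ)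

/-- The inverse Fourier transform of the cubic spline `autocorrSum a (bspline 3)`; it is nonnegative
because the coefficients of the spline are an autocorrelation. -/
def splineDual (x : ℝ) : ℝ :=
  normSq (trigPoly a x) * Real.sinc (Real.pi * x) ^ 4

theorem continuous_splineDual : Continuous (splineDual a) :=
  (continuous_normSq.comp (continuous_trigPoly a)).mul
    ((Real.continuous_sinc.comp (continuous_const_mul _)).pow 4)

theorem splineDual_neg (x : ℝ) : splineDual a (-x) = splineDual a x := by
  rw [splineDual, splineDual, trigPoly_neg, normSq_conj, mul_neg, Real.sinc_neg]

theorem splineDual_nonneg (x : ℝ) : 0 ≤ splineDual a x :=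
  mul_nonneg (normSq_nonneg _) (by positivity)

theorem integrable_splineDual : Integrable (splineDual a) := by
  have hsinc := (integrable_sinc_pow (n := 4) (by norm_num)).comp_mul_left' Real.pi_ne_zero
  refine hsinc.bdd_mul (c := (∑ j, |a j|) ^ 2)
    (continuous_normSq.comp (continuous_trigPoly a)).aestronglyMeasurable (.of_forall fun x ↦ ?_)
  rw [Real.norm_of_nonneg (normSq_nonneg _), normSq_eq_norm_sq]
  gcongr
  exact norm_trigPoly_le a x

theorem splineDual_zero : splineDual a 0 = (∑ j, a j) ^ 2 := by
  simp [splineDual, trigPoly, ← ofReal_sum, normSq_ofReal, sq]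

theorem fourierT_splineDual (β : ℝ) :
    fourierT (splineDual a) β = autocorrSum a (bspline 3) β := by
  refine fourierT_eq_of_fourierT_eq (continuous_autocorrSum a (continuous_bspline_succ 2))
    (integrable_autocorrSum a (integrable_bspline 3)) (integrable_splineDual a) (splineDual_neg a)
    (fun ξ ↦ ?_) β
  rw [fourierT_autocorrSum a (integrable_bspline 3), fourierT_eq_fourier, fourier_bspline,
    splineDual]
  push_cast
  rfl

end SplineDual

section CubicCells

theorem truncPow_int_add {n : ℕ} (hn : n ≠ 0) (s : ℤ) {u : ℝ} (hu : u ∈ Icc (0 : ℝ) 1) :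
    truncPow n (s + u) = if 0 ≤ s then (s + u) ^ n / (n.factorial : ℝ) else 0 := by
  split_ifs with hs
  · have hs' : (0 : ℝ) ≤ s := by exact_mod_cast hs
    rcases (add_nonneg hs' hu.1).eq_or_lt with h | h
    · rw [truncPow, ← h]; simp [hn]
    · exact indicator_of_mem (mem_Ioi.2 h) _
  · have hs' : (s : ℝ) ≤ -1 := by exact_mod_cast (by lia : s ≤ -1)
    exact indicator_of_notMem (notMem_Ioi.2 (by linarith [hu.2])) _

theorem bspline_three_int_add (r : ℤ) {u : ℝ} (hu : u ∈ Icc (0 : ℝ) 1) :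
    bspline 3 (r + u) =
      (if r = 1 then (1 - u) ^ 3 / 6 else 0) +
      (if r = 0 then (3 * u ^ 3 - 6 * u ^ 2 + 4) / 6 else 0) +
      (if r = -1 then (-3 * u ^ 3 + 3 * u ^ 2 + 3 * u + 1) / 6 else 0) +
      (if r = -2 then u ^ 3 / 6 else 0) := by
  have hshift (k : ℕ) :
      (r + u - ((3 : ℕ) + 1) / 2 + k • (1 : ℝ) : ℝ) = ((r - 2 + k : ℤ) : ℝ) + u := by
    push_cast
    ring
  rw [bspline_eq_fwdDiff_truncPow, fwdDiff_iter_eq_sum_shift]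
  simp only [hshift, truncPow_int_add three_ne_zero _ hu, Finset.sum_range_succ,
    Finset.sum_range_zero]
  obtain hr | hr | hr : r < -2 ∨ 1 < r ∨ -2 ≤ r ∧ r ≤ 1 := by lia
  · repeat rw [if_neg (by lia)]
    simp
  · repeat rw [if_pos (by lia)]
    repeat rw [if_neg (by lia)]
    norm_num [Nat.factorial, Nat.choose]
    ring
  · obtain ⟨hlo, hhi⟩ := hr
    interval_cases r <;> norm_num [Nat.factorial, Nat.choose] <;> ring

/-- The value at `i + u`, `0 ≤ u ≤ 1`, of the cubic spline `∑ b_l bspline 3 (x - l)`. -/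
def cubicCell (b : ℤ → ℝ) (i : ℤ) (u : ℝ) : ℝ :=
  (b (i - 1) * (1 - u) ^ 3 + b i * (3 * u ^ 3 - 6 * u ^ 2 + 4) +
    b (i + 1) * (-3 * u ^ 3 + 3 * u ^ 2 + 3 * u + 1) + b (i + 2) * u ^ 3) / 6

theorem autocorrSum_bspline_three_int_add {n : ℕ} (a : Fin n → ℝ) (i : ℤ) {u : ℝ}
    (hu : u ∈ Icc (0 : ℝ) 1) :
    autocorrSum a (bspline 3) (i + u) = cubicCell (autocorr a) i u := by
  have hcell (p : Fin n × Fin n) : a p.1 * a p.2 * bspline 3 (i + u - (p.1 - p.2 : ℤ)) =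
      ((if (p.1 : ℤ) - p.2 = i - 1 then a p.1 * a p.2 else 0) * (1 - u) ^ 3 +
        (if (p.1 : ℤ) - p.2 = i then a p.1 * a p.2 else 0) * (3 * u ^ 3 - 6 * u ^ 2 + 4) +
        (if (p.1 : ℤ) - p.2 = i + 1 then a p.1 * a p.2 else 0) *
          (-3 * u ^ 3 + 3 * u ^ 2 + 3 * u + 1) +
        (if (p.1 : ℤ) - p.2 = i + 2 then a p.1 * a p.2 else 0) * u ^ 3) / 6 := by
    have hsub : (i + u - (p.1 - p.2 : ℤ) : ℝ) = (i - (p.1 - p.2) : ℤ) + u := by push_cast; ring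
    rw [hsub, bspline_three_int_add _ hu]
    grind
  rw [autocorrSum, Finset.sum_congr rfl fun p _ ↦ hcell p, ← Finset.sum_div]
  simp only [Finset.sum_add_distrib, ← Finset.sum_mul, ← Finset.sum_filter]
  rfl

theorem cubicCell_nonpos {b : ℤ → ℝ} {N : ℤ} (hb : ∀ l, N ≤ l → b l ≤ 0)
    (hN : b (N - 1) + 4 * b N + b (N + 1) ≤ 0) {i : ℤ} (hi : N ≤ i) {u : ℝ}
    (hu : u ∈ Icc (0 : ℝ) 1) : cubicCell b i u ≤ 0 := by
  have hleft : b (i - 1) + 4 * b i + b (i + 1) ≤ 0 := by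
    rcases hi.eq_or_lt with rfl | hi
    · exact hN
    · linarith [hb (i - 1) (by lia), hb i hi.le, hb (i + 1) (by lia)]
  have hi₀ := hb i hi
  have hi₁ := hb (i + 1) (by lia)
  have hi₂ := hb (i + 2) (by lia)
  have hbernstein : 6 * cubicCell b i u =
      (b (i - 1) + 4 * b i + b (i + 1)) * (1 - u) ^ 3 +
      (2 * b i + b (i + 1)) * (6 * (u * (1 - u) ^ 2)) +
      (b i + 2 * b (i + 1)) * (6 * (u ^ 2 * (1 - u))) +
      (b i + 4 * b (i + 1) + b (i + 2)) * u ^ 3 := by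
    rw [cubicCell]
    ring
  have hu₀ := hu.1
  have hu₁ := sub_nonneg.2 hu.2
  linarith [mul_nonpos_of_nonpos_of_nonneg hleft (by positivity : 0 ≤ (1 - u) ^ 3),
    mul_nonpos_of_nonpos_of_nonneg (by linarith : 2 * b i + b (i + 1) ≤ 0)
      (by positivity : 0 ≤ 6 * (u * (1 - u) ^ 2)),
    mul_nonpos_of_nonpos_of_nonneg (by linarith : b i + 2 * b (i + 1) ≤ 0)
      (by positivity : 0 ≤ 6 * (u ^ 2 * (1 - u))),
    mul_nonpos_of_nonpos_of_nonneg (by linarith : b i + 4 * b (i + 1) + b (i + 2) ≤ 0)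
      (by positivity : 0 ≤ u ^ 3)]

theorem integral_pow_mul_sum_pow {n : ℕ} (c : Fin n → ℝ) (p : ℕ) :
    ∫ u in (0 : ℝ)..1, u ^ p * ∑ k, c k * u ^ (k : ℕ) = ∑ k, c k / (p + k + 1) := by
  have hterm (u : ℝ) : u ^ p * ∑ k, c k * u ^ (k : ℕ) = ∑ k, c k * u ^ (p + k : ℕ) := by
    rw [Finset.mul_sum]
    exact Finset.sum_congr rfl fun k _ ↦ by rw [mul_left_comm, pow_add]
  simp_rw [hterm]
  rw [intervalIntegral.integral_finsetSum fun k _ ↦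
    (Continuous.intervalIntegrable (by fun_prop) _ _)]
  refine Finset.sum_congr rfl fun k _ ↦ ?_
  rw [intervalIntegral.integral_const_mul, integral_pow, one_pow, zero_pow (p + k).succ_ne_zero,
    sub_zero, mul_one_div, Nat.cast_add]

/-- The coefficients of the polynomial `cubicCell b i` in the monomial basis `1, u, u², u³`. -/
def cubicCellCoeff (b : ℤ → ℝ) (i : ℤ) : Fin 4 → ℝ :=
  ![(b (i - 1) + 4 * b i + b (i + 1)) / 6, (b (i + 1) - b (i - 1)) / 2,
    (b (i - 1) - 2 * b i + b (i + 1)) / 2, (b (i + 2) - 3 * b (i + 1) + 3 * b i - b (i - 1)) / 6]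

theorem cubicCell_eq_sum_pow (b : ℤ → ℝ) (i : ℤ) (u : ℝ) :
    cubicCell b i u = ∑ k, cubicCellCoeff b i k * u ^ (k : ℕ) := by
  simp [cubicCell, cubicCellCoeff, Fin.sum_univ_succ]
  ring

theorem integral_cubicCell (b : ℤ → ℝ) (i : ℤ) :
    ∫ u in (0 : ℝ)..1, cubicCell b i u =
      (b (i - 1) + 11 * b i + 11 * b (i + 1) + b (i + 2)) / 24 := by
  have hmoment := integral_pow_mul_sum_pow (cubicCellCoeff b i) 0
  simp_rw [← cubicCell_eq_sum_pow, pow_zero, one_mul] at hmoment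
  rw [hmoment]
  simp [cubicCellCoeff, Fin.sum_univ_succ]
  ring

theorem integral_mul_cubicCell (b : ℤ → ℝ) (i : ℤ) :
    ∫ u in (0 : ℝ)..1, u * cubicCell b i u =
      (b (i - 1) + 22 * b i + 33 * b (i + 1) + 4 * b (i + 2)) / 120 := by
  have hmoment := integral_pow_mul_sum_pow (cubicCellCoeff b i) 1
  simp_rw [← cubicCell_eq_sum_pow, pow_one] at hmoment
  rw [hmoment]
  simp [cubicCellCoeff, Fin.sum_univ_succ]
  ring

end CubicCells

section CellSums

theorem integral_eq_sum_integral_unit {f : ℝ → ℝ} (hf : Continuous f) {M N : ℕ} (hMN : M ≤ N) :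
    ∫ x in (M : ℝ)..N, f x = ∑ i ∈ Finset.Ico M N, ∫ u in (0 : ℝ)..1, f (i + u) := by
  rw [← intervalIntegral.sum_integral_adjacent_intervals_Ico hMN
    fun i _ ↦ hf.intervalIntegrable _ _]
  refine Finset.sum_congr rfl fun i _ ↦ ?_
  rw [intervalIntegral.integral_comp_add_left, add_zero, Nat.cast_succ]

variable {n : ℕ} (a : Fin n → ℝ)

theorem autocorrSum_bspline_three_zero :
    autocorrSum a (bspline 3) 0 = (autocorr a (-1) + 4 * autocorr a 0 + autocorr a 1) / 6 := by
  have hcell := autocorrSum_bspline_three_int_add a 0 (left_mem_Icc.2 zero_le_one)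
  simp only [Int.cast_zero, add_zero, cubicCell, zero_sub, zero_add, sub_zero] at hcell
  rw [hcell]
  ring

theorem integral_unit_autocorrSum_bspline_three (i : ℤ) :
    ∫ u in (0 : ℝ)..1, autocorrSum a (bspline 3) (i + u) =
      (autocorr a (i - 1) + 11 * autocorr a i + 11 * autocorr a (i + 1) + autocorr a (i + 2)) /
        24 := by
  rw [← integral_cubicCell]
  refine intervalIntegral.integral_congr fun u hu ↦ ?_
  rw [uIcc_of_le (zero_le_one' ℝ)] at hu
  exact autocorrSum_bspline_three_int_add a i hu

theorem integral_unit_mul_autocorrSum_bspline_three (i : ℤ) :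
    ∫ u in (0 : ℝ)..1, (i + u) * autocorrSum a (bspline 3) (i + u) =
      i * ((autocorr a (i - 1) + 11 * autocorr a i + 11 * autocorr a (i + 1) +
        autocorr a (i + 2)) / 24) +
      (autocorr a (i - 1) + 22 * autocorr a i + 33 * autocorr a (i + 1) +
        4 * autocorr a (i + 2)) / 120 := by
  have hcont : Continuous (cubicCell (autocorr a) i) := by unfold cubicCell; fun_prop
  rw [← integral_cubicCell, ← integral_mul_cubicCell, ← intervalIntegral.integral_const_mul,
    ← intervalIntegral.integral_add (Continuous.intervalIntegrable (by fun_prop) _ _)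
      (Continuous.intervalIntegrable (by fun_prop) _ _)]
  refine intervalIntegral.integral_congr fun u hu ↦ ?_
  rw [uIcc_of_le (zero_le_one' ℝ)] at hu
  simp only [autocorrSum_bspline_three_int_add a i hu, add_mul]

theorem mul_integral_autocorrSum_bspline_three {M N : ℕ} (hMN : M ≤ N) :
    24 * ∫ x in (M : ℝ)..N, autocorrSum a (bspline 3) x =
      ∑ i ∈ Finset.Ico M N,
        (autocorr a (i - 1) + 11 * autocorr a i + 11 * autocorr a (i + 1) +
          autocorr a (i + 2)) := by
  rw [integral_eq_sum_integral_unit (continuous_autocorrSum a (continuous_bspline_succ 2)) hMN,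
    Finset.mul_sum]
  refine Finset.sum_congr rfl fun i _ ↦ ?_
  have hcell := integral_unit_autocorrSum_bspline_three a i
  rw [Int.cast_natCast] at hcell
  rw [hcell, mul_div_cancel₀ _ (by norm_num)]

theorem mul_integral_mul_autocorrSum_bspline_three (N : ℕ) :
    120 * ∫ x in (0 : ℝ)..N, x * autocorrSum a (bspline 3) x =
      ∑ i ∈ Finset.range N,
        (5 * i * (autocorr a (i - 1) + 11 * autocorr a i + 11 * autocorr a (i + 1) +
          autocorr a (i + 2)) +
        (autocorr a (i - 1) + 22 * autocorr a i + 33 * autocorr a (i + 1) +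
          4 * autocorr a (i + 2))) := by
  have hcells := integral_eq_sum_integral_unit
    (continuous_id.mul (continuous_autocorrSum a (continuous_bspline_succ 2))) N.zero_le
  simp only [Pi.mul_apply, id, Nat.cast_zero, Nat.Ico_zero_eq_range] at hcells
  rw [hcells, Finset.mul_sum]
  refine Finset.sum_congr rfl fun i _ ↦ ?_
  have hcell := integral_unit_mul_autocorrSum_bspline_three a i
  rw [Int.cast_natCast] at hcell
  rw [hcell]
  ring

theorem autocorrSum_bspline_three_nonpos {N : ℤ} (hb : ∀ l, N ≤ l → autocorr a l ≤ 0)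
    (hN : autocorr a (N - 1) + 4 * autocorr a N + autocorr a (N + 1) ≤ 0) {x : ℝ} (hx : N ≤ x) :
    autocorrSum a (bspline 3) x ≤ 0 := by
  rw [← Int.floor_add_fract x, autocorrSum_bspline_three_int_add a _
    ⟨Int.fract_nonneg x, (Int.fract_lt_one x).le⟩]
  exact cubicCell_nonpos hb hN (Int.le_floor.2 hx) ⟨Int.fract_nonneg x, (Int.fract_lt_one x).le⟩

end CellSums

section SplineTestFunction

variable {n : ℕ}

theorem fourierT_splineDual_comp_div (a : Fin n → ℝ) {m : ℝ} (hm : 0 < m) (α : ℝ) :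
    (fourierT (fun x ↦ splineDual a (x / m)) α).re = m * autocorrSum a (bspline 3) (m * α) := by
  rw [fourierT_comp_div _ hm, fourierT_splineDual, ← ofReal_mul, ofReal_re]

theorem memA2_splineDual_comp_div (a : Fin n → ℝ) {m : ℕ} (hm : 0 < m)
    (hb : ∀ l : ℤ, 2 * m ≤ l → autocorr a l ≤ 0)
    (hm' : autocorr a (2 * m - 1) + 4 * autocorr a (2 * m) + autocorr a (2 * m + 1) ≤ 0) :
    memA2 fun x ↦ splineDual a (x / m) := by
  have hm₀ : (0 : ℝ) < m := by exact_mod_cast hm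
  refine ⟨(continuous_splineDual a).comp (continuous_id.div_const _),
    fun x ↦ by simp only [neg_div, splineDual_neg], fun x ↦ splineDual_nonneg a _,
    (integrable_splineDual a).comp_div hm₀.ne', fun α hα ↦ ?_⟩
  rw [← re_fourierT_abs, fourierT_splineDual_comp_div a hm₀]
  refine mul_nonpos_of_nonneg_of_nonpos hm₀.le (autocorrSum_bspline_three_nonpos a hb hm' ?_)
  push_cast
  nlinarith

theorem rho2_splineDual_comp_div (a : Fin n → ℝ) {m : ℝ} (hm : 0 < m) :
    rho2 (fun x ↦ splineDual a (x / m)) = m * autocorrSum a (bspline 3) 0 +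
      2 / m * (∫ β in (0 : ℝ)..m, β * autocorrSum a (bspline 3) β) +
      2 * ∫ β in m..2 * m, autocorrSum a (bspline 3) β := by
  have hinner := intervalIntegral.mul_integral_comp_mul_left
    (f := fun β ↦ β * autocorrSum a (bspline 3) β) (a := 0) (b := 1) m
  have houter := intervalIntegral.mul_integral_comp_mul_left
    (f := autocorrSum a (bspline 3)) (a := 1) (b := 2) m
  rw [mul_zero, mul_one] at hinner
  rw [mul_one, mul_comm m 2] at houter
  simp_rw [rho2_eq, fourierT_splineDual_comp_div a hm, mul_zero]
  rw [← hinner, ← houter, intervalIntegral.integral_const_mul, ← mul_assoc (2 / m),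
    div_mul_cancel₀ _ hm.ne']
  congr! 5 with α
  ring

/-- The value of `60 m ρ₂(g)` for `g x = splineDual a (x / m)` in terms of the autocorrelation `b`
of `a`. The weights are the values and moments of the polynomial pieces of the cubic B-spline; the
factor `60 m` clears denominators, so that integer data give an integer. -/
def splineRho2 {R : Type*} [CommRing R] (b : ℤ → R) (m : ℕ) : R :=
  10 * m ^ 2 * (b (-1) + 4 * b 0 + b 1) +
    ∑ i ∈ Finset.range m, (5 * i * (b (i - 1) + 11 * b i + 11 * b (i + 1) + b (i + 2)) +
      (b (i - 1) + 22 * b i + 33 * b (i + 1) + 4 * b (i + 2))) +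
    5 * m * ∑ i ∈ Finset.Ico m (2 * m), (b (i - 1) + 11 * b i + 11 * b (i + 1) + b (i + 2))

theorem map_splineRho2 {R S : Type*} [CommRing R] [CommRing S] (φ : R →+* S) (b : ℤ → R) (m : ℕ) :
    φ (splineRho2 b m) = splineRho2 (fun l ↦ φ (b l)) m := by
  simp only [splineRho2, map_add, map_mul, map_sum, map_pow, map_natCast, map_ofNat]

theorem mul_rho2_splineDual_comp_div (a : Fin n → ℝ) {m : ℕ} (hm : 0 < m) :
    60 * m * rho2 (fun x ↦ splineDual a (x / m)) = splineRho2 (autocorr a) m := by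
  have hm₀ : (0 : ℝ) < m := by exact_mod_cast hm
  have houter := mul_integral_autocorrSum_bspline_three a (Nat.le_mul_of_pos_left m two_pos)
  rw [Nat.cast_mul, Nat.cast_ofNat] at houter
  rw [rho2_splineDual_comp_div a hm₀, autocorrSum_bspline_three_zero, splineRho2,
    ← mul_integral_mul_autocorrSum_bspline_three, ← houter]
  field_simp
  ring

/-- The sequence whose autocorrelation defines the test function, found by numerical minimisation of
`ρ₂(g)/g(0)` and rounded to integers; the ratio it gives is `1.064999…`. -/
def splineCoeff : Fin 14 → ℤ :=
  ![37, 102, 160, 192, 201, 209, 206, 191, 167, 136, 80, 20, -18, -18]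

theorem splineRho2_splineCoeff_lt :
    200 * splineRho2 (autocorr splineCoeff) 5 < 213 * (60 * 5 * (∑ j, splineCoeff j) ^ 2) := by
  decide +kernel

theorem autocorr_splineCoeff_nonpos {l : ℤ} (hl : 10 ≤ l) : autocorr splineCoeff l ≤ 0 := by
  rcases le_or_gt 14 l with hl' | hl'
  · exact (autocorr_eq_zero splineCoeff hl').le
  · have hnonpos : ∀ l ∈ Finset.Ico (10 : ℤ) 14, autocorr splineCoeff l ≤ 0 := by decide +kernel
    exact hnonpos l (Finset.mem_Ico.2 ⟨hl, hl'⟩)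

theorem autocorr_splineCoeff_knot_nonpos :
    autocorr splineCoeff 9 + 4 * autocorr splineCoeff 10 + autocorr splineCoeff 11 ≤ 0 := by
  decide +kernel

/-- The test function `g`: its Fourier transform is the cubic spline with knots at the multiples of
`1/5` and B-spline coefficients `5 * autocorr splineCoeff`. -/
def testFun (x : ℝ) : ℝ :=
  splineDual (fun j ↦ (splineCoeff j : ℝ)) (x / 5)

theorem memA2_testFun : memA2 testFun := by
  refine memA2_splineDual_comp_div (m := 5) _ (by norm_num) (fun l hl ↦ ?_) ?_
  · rw [autocorr_intCast]
    exact_mod_cast autocorr_splineCoeff_nonpos hl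
  · simp only [autocorr_intCast]
    exact_mod_cast autocorr_splineCoeff_knot_nonpos

theorem testFun_zero : testFun 0 = ((∑ j, splineCoeff j : ℤ) : ℝ) ^ 2 := by
  rw [testFun, zero_div, splineDual_zero, Int.cast_sum]

theorem testFun_zero_pos : 0 < testFun 0 := by
  rw [testFun_zero]
  have hsum : ∑ j, splineCoeff j ≠ 0 := by decide +kernel
  positivity

theorem rho2_testFun_div_lt : rho2 testFun / testFun 0 < 1.0650 := by
  have hrho : 60 * 5 * rho2 testFun = (splineRho2 (autocorr splineCoeff) 5 : ℤ) := by
    have hreal := mul_rho2_splineDual_comp_div (fun j ↦ (splineCoeff j : ℝ)) (m := 5) (by norm_num)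
    simp only [funext (autocorr_intCast splineCoeff)] at hreal
    exact hreal.trans (map_splineRho2 (Int.castRingHom ℝ) _ 5).symm
  have hlt : 200 * ((splineRho2 (autocorr splineCoeff) 5 : ℤ) : ℝ) <
      213 * (60 * 5 * testFun 0) := by
    rw [testFun_zero]
    exact_mod_cast splineRho2_splineCoeff_lt
  rw [div_lt_iff₀ testFun_zero_pos]
  linarith

end SplineTestFunction

end

/-- `C₂ < 1.0650`: there exists a nonzero `g ∈ A₂` with `g(0) > 0` and
`ρ₂(g)/g(0) < 1.0650`. -/
theorem statement18 :
    C2 < 1.0650 ∧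
      ∃ g : ℝ → ℝ, memA2 g ∧ g ≠ 0 ∧ 0 < g 0 ∧ rho2 g / g 0 < 1.0650 := by
  have hne : testFun ≠ 0 := fun h ↦ testFun_zero_pos.ne' (congrFun h 0)
  have hmem : rho2 testFun / testFun 0 ∈
      {c : ℝ | ∃ g : ℝ → ℝ, memA2 g ∧ g ≠ 0 ∧ 0 < g 0 ∧ c = rho2 g / g 0} :=
    ⟨testFun, memA2_testFun, hne, testFun_zero_pos, rfl⟩
  exact ⟨(csInf_le bddBelow_rho2_div hmem).trans_lt rho2_testFun_div_lt,
    testFun, memA2_testFun, hne, testFun_zero_pos, rho2_testFun_div_lt⟩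

end
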